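/- Let W be a standard Brownian motion and γ₀ > −1/2, γ₀ ≠ 0. With U₁ = (1/γ₀)∫₀¹ (s^{γ₀} − (1+γ₀)s^{2γ₀})(s^{−γ₀−1}W(s) − W(1)) ds and U₂ = (1+γ₀)∫₀¹ s^{2γ₀}(s^{−γ₀−1}W(s) − W(1)) ds, one has Cov(U₁, U₂) = (1+γ₀)/(1+2γ₀)². -/

import Mathlib

/-!
Up to null sets, with `A = ∫₀¹ s⁻¹ W(s) ds`, `B = ∫₀¹ s^(γ₀-1) W(s) ds` and `X = W(1)`,

* `U₁ = (1/γ₀) (A - (1+γ₀) B - c X)` with `c = 1/(1+γ₀) - (1+γ₀)/(1+2γ₀)`,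
* `U₂ = (1+γ₀) (B - X/(1+2γ₀))`.

The variable `U₂` is centred, so the covariance is `E[U₁ U₂]`, a combination of `E[AB]`, `E[BB]`,
`E[AX]`, `E[BX]` and `E[X²] = 1`. The first four follow from Fubini and `E[W(s) W(t)] = min s t`
(`IsStdBrownian.cov_weighted`; `X` is the integral of the path against the Dirac mass at `1`).
Fubini applies because `E|W(s) W(t)| ≤ √s √t` and `s^r √s` is integrable on `(0,1]` for `r > -3/2`,
which for `r = γ₀ - 1` is the hypothesis `γ₀ > -1/2`. The same bound shows that the path
integrals defining `A` and `B` converge almost surely, as is needed to split `U₁` and `U₂`.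
The remaining integrals of powers are elementary (`double_integral`).
-/

open MeasureTheory ProbabilityTheory

/-- A standard Brownian motion on `[0,∞)`: continuous paths started at `0`, measurable
marginals, Gaussian increments with variance `t - s`, independent of the past. -/
def IsStdBrownian {Ω : Type*} [MeasurableSpace Ω] (μ : Measure Ω) (W : ℝ → Ω → ℝ) : Prop :=
  IsProbabilityMeasure μ ∧
  (∀ ω, W 0 ω = 0) ∧
  (∀ ω, Continuous fun s => W s ω) ∧
  (∀ s, Measurable (W s)) ∧
  (∀ s t : ℝ, 0 ≤ s → s ≤ t →
    Measure.map (fun ω => W t ω - W s ω) μ = gaussianReal 0 (Real.toNNReal (t - s))) ∧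
  (∀ s t : ℝ, 0 ≤ s → s ≤ t → IndepFun (W s) (fun ω => W t ω - W s ω) μ)

/-- `U₁ = (1/γ)∫₀¹ (s^γ - (1+γ)s^{2γ})(s^{-γ-1}W(s) - W(1)) ds`. -/
noncomputable def Ustat1 {Ω : Type*} (W : ℝ → Ω → ℝ) (γ : ℝ) (ω : Ω) : ℝ :=
  (1/γ) * ∫ s in Set.Ioc (0:ℝ) 1,
    (s ^ γ - (1+γ) * s ^ (2*γ)) * (s ^ (-γ-1) * W s ω - W 1 ω)

/-- `U₂ = (1+γ)∫₀¹ s^{2γ}(s^{-γ-1}W(s) - W(1)) ds`. -/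
noncomputable def Ustat2 {Ω : Type*} (W : ℝ → Ω → ℝ) (γ : ℝ) (ω : Ω) : ℝ :=
  (1+γ) * ∫ s in Set.Ioc (0:ℝ) 1, s ^ (2*γ) * (s ^ (-γ-1) * W s ω - W 1 ω)

/-! ### Moments of Brownian motion -/

section Moments

variable {Ω : Type*} [MeasurableSpace Ω] {μ : Measure Ω} {W : ℝ → Ω → ℝ}

lemma IsStdBrownian.hasLaw (hW : IsStdBrownian μ W) {t : ℝ} (ht : 0 ≤ t) :
    HasLaw (W t) (gaussianReal 0 (Real.toNNReal t)) μ := by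
  obtain ⟨_, h0, _, hm, hinc, _⟩ := hW
  refine ⟨(hm t).aemeasurable, ?_⟩
  simpa [h0] using hinc 0 t le_rfl ht

lemma IsStdBrownian.memLp (hW : IsStdBrownian μ W) {t : ℝ} (ht : 0 ≤ t) :
    MemLp (W t) 2 μ := by
  have h := hW.hasLaw ht
  have h2 : MemLp id 2 (μ.map (W t)) := by
    rw [h.map_eq]; exact memLp_id_gaussianReal' 2 (by simp)
  exact h2.comp_of_map h.aemeasurable

lemma IsStdBrownian.mean (hW : IsStdBrownian μ W) {t : ℝ} (ht : 0 ≤ t) :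
    ∫ ω, W t ω ∂μ = 0 := by
  rw [(hW.hasLaw ht).integral_eq, integral_id_gaussianReal]

lemma IsStdBrownian.second_moment (hW : IsStdBrownian μ W) {t : ℝ} (ht : 0 ≤ t) :
    ∫ ω, W t ω ^ 2 ∂μ = t := by
  rw [← variance_of_integral_eq_zero (hW.hasLaw ht).aemeasurable (hW.mean ht),
    (hW.hasLaw ht).variance_eq, variance_id_gaussianReal, Real.coe_toNNReal t ht]

lemma IsStdBrownian.integral_mul_of_le (hW : IsStdBrownian μ W) {s t : ℝ} (hs : 0 ≤ s)
    (hst : s ≤ t) : ∫ ω, W s ω * W t ω ∂μ = s := by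
  have : IsProbabilityMeasure μ := hW.1
  have Ls := hW.memLp hs
  have Lt := hW.memLp (hs.trans hst)
  have hind : ∫ ω, W s ω * (W t ω - W s ω) ∂μ = 0 := by
    have h := (hW.2.2.2.2.2 s t hs hst).integral_mul_eq_mul_integral
      Ls.aestronglyMeasurable (Lt.sub Ls).aestronglyMeasurable
    simpa [hW.mean hs] using h
  calc ∫ ω, W s ω * W t ω ∂μ
      = ∫ ω, (W s ω ^ 2 + W s ω * (W t ω - W s ω)) ∂μ := by
        congr 1; ext ω; ring
    _ = s := by
        have hi : Integrable (fun ω => W s ω * (W t ω - W s ω)) μ :=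
          Ls.integrable_mul (Lt.sub Ls)
        rw [integral_add Ls.integrable_sq hi, hind, hW.second_moment hs, add_zero]

lemma IsStdBrownian.integral_mul (hW : IsStdBrownian μ W) {s t : ℝ} (hs : 0 ≤ s)
    (ht : 0 ≤ t) : ∫ ω, W s ω * W t ω ∂μ = min s t := by
  rcases le_total s t with h | h
  · rw [min_eq_left h, hW.integral_mul_of_le hs h]
  · simp_rw [min_eq_right h, mul_comm (W s _), hW.integral_mul_of_le ht h]

/-- The Cauchy–Schwarz bound on `E|W(s) W(t)|`, which serves as the dominating function in Fubini.
It comes from AM-GM with weights `√t / √s` and `√s / √t`. -/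
lemma IsStdBrownian.integral_abs_mul_le (hW : IsStdBrownian μ W) {s t : ℝ} (hs : 0 < s)
    (ht : 0 < t) : ∫ ω, |W s ω * W t ω| ∂μ ≤ √s * √t := by
  have Ls := hW.memLp hs.le
  have Lt := hW.memLp ht.le
  have ps := Real.sqrt_pos.2 hs
  have pt := Real.sqrt_pos.2 ht
  calc ∫ ω, |W s ω * W t ω| ∂μ
      ≤ ∫ ω, (√t / (2 * √s) * W s ω ^ 2 + √s / (2 * √t) * W t ω ^ 2) ∂μ := by
        refine integral_mono (Ls.integrable_mul Lt).abs
          ((Ls.integrable_sq.const_mul _).add (Lt.integrable_sq.const_mul _)) fun ω => ?_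
        have key : √t / (2 * √s) * W s ω ^ 2 + √s / (2 * √t) * W t ω ^ 2 - |W s ω| * |W t ω|
            = (√t * |W s ω| - √s * |W t ω|) ^ 2 / (2 * √s * √t) := by
          rw [← sq_abs (W s ω), ← sq_abs (W t ω)]
          field_simp
          ring
        have : 0 ≤ (√t * |W s ω| - √s * |W t ω|) ^ 2 / (2 * √s * √t) := by positivity
        simp only [abs_mul]
        linarith
    _ = √s * √t := by
        rw [integral_add (Ls.integrable_sq.const_mul _) (Lt.integrable_sq.const_mul _),
          integral_const_mul, integral_const_mul, hW.second_moment hs.le,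
          hW.second_moment ht.le]
        have aux : ∀ x y a b : ℝ, 0 < x → 0 < y → a = x ^ 2 → b = y ^ 2 →
            y / (2 * x) * a + x / (2 * y) * b = x * y := by
          rintro x y a b hx hy rfl rfl
          field_simp
          ring
        exact aux _ _ _ _ ps pt (Real.sq_sqrt hs.le).symm (Real.sq_sqrt ht.le).symm

lemma IsStdBrownian.integral_abs_le (hW : IsStdBrownian μ W) {s : ℝ} (hs : 0 < s) :
    ∫ ω, |W s ω| ∂μ ≤ √s := by
  have : IsProbabilityMeasure μ := hW.1
  have Ls := hW.memLp hs.le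
  have ps := Real.sqrt_pos.2 hs
  calc ∫ ω, |W s ω| ∂μ ≤ ∫ ω, (√s / 2 + 1 / (2 * √s) * W s ω ^ 2) ∂μ := by
        refine integral_mono (Ls.integrable (by norm_num)).abs
          ((integrable_const _).add (Ls.integrable_sq.const_mul _)) fun ω => ?_
        have key : √s / 2 + 1 / (2 * √s) * W s ω ^ 2 - |W s ω|
            = (√s - |W s ω|) ^ 2 / (2 * √s) := by
          rw [← sq_abs (W s ω)]
          field_simp
          ring
        have : 0 ≤ (√s - |W s ω|) ^ 2 / (2 * √s) := by positivity
        simp only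
        linarith
    _ = √s := by
        rw [integral_add (integrable_const _) (Ls.integrable_sq.const_mul _),
          integral_const_mul, hW.second_moment hs.le]
        nth_rewrite 3 [← Real.sq_sqrt hs.le]
        simp
        field_simp
        ring

lemma IsStdBrownian.measurable_joint (hW : IsStdBrownian μ W) :
    Measurable fun p : Ω × ℝ => W p.2 p.1 :=
  (measurable_uncurry_of_continuous_of_measurable hW.2.2.1 hW.2.2.2.1).comp measurable_swap

end Moments

/-! ### Fubini for weighted path integrals -/

section WeightedIntegrals

variable {Ω : Type*} [MeasurableSpace Ω] {μ : Measure Ω} {W : ℝ → Ω → ℝ}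

/-- Joint integrability of a random field from an integrable bound on its first absolute moments. -/
lemma integrable_prod_of_bound {α : Type*} [MeasurableSpace α] {ν : Measure α} [SFinite ν]
    [SFinite μ] {K : Ω × α → ℝ} (hK : Measurable K) {b : α → ℝ} (hb : Integrable b ν)
    (h : ∀ᵐ a ∂ν, Integrable (fun ω => K (ω, a)) μ ∧ ∫ ω, |K (ω, a)| ∂μ ≤ b a) :
    Integrable K (μ.prod ν) := by
  rw [integrable_prod_iff' hK.aestronglyMeasurable]
  refine ⟨h.mono fun a ha => ha.1, hb.mono' ?_ ?_⟩
  · exact (hK.norm.stronglyMeasurable.integral_prod_left' (μ := μ)).aestronglyMeasurable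
  · filter_upwards [h] with a ha
    rw [Real.norm_of_nonneg (integral_nonneg fun _ => norm_nonneg _)]
    exact ha.2

lemma IsStdBrownian.integrable_weighted (hW : IsStdBrownian μ W) {ν : Measure ℝ} [SFinite ν]
    (hν : ∀ᵐ s ∂ν, 0 < s) {f : ℝ → ℝ} (hf : Measurable f)
    (hfi : Integrable (fun s => |f s| * √s) ν) :
    Integrable (fun p : Ω × ℝ => f p.2 * W p.2 p.1) (μ.prod ν) := by
  have : IsProbabilityMeasure μ := hW.1
  refine integrable_prod_of_bound ((hf.comp measurable_snd).mul hW.measurable_joint) hfi ?_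
  filter_upwards [hν] with s hs
  refine ⟨((hW.memLp hs.le).integrable (by norm_num)).const_mul _, ?_⟩
  simp only [abs_mul]
  rw [integral_const_mul]
  exact mul_le_mul_of_nonneg_left (hW.integral_abs_le hs) (abs_nonneg _)

lemma IsStdBrownian.mean_weighted (hW : IsStdBrownian μ W) {ν : Measure ℝ} [SFinite ν]
    (hν : ∀ᵐ s ∂ν, 0 < s) {f : ℝ → ℝ} (hf : Measurable f)
    (hfi : Integrable (fun s => |f s| * √s) ν) :
    ∫ ω, ∫ s, f s * W s ω ∂ν ∂μ = 0 := by
  have : IsProbabilityMeasure μ := hW.1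
  rw [integral_integral_swap (hW.integrable_weighted hν hf hfi)]
  refine integral_eq_zero_of_ae ?_
  filter_upwards [hν] with s hs
  rw [integral_const_mul, hW.mean hs.le, mul_zero]
  rfl

/-- Covariance of two weighted integrals of the path, against possibly different measures. Only
integrability of the weights times `√s` is needed, because `E|W(s) W(t)| ≤ √s √t`. -/
lemma IsStdBrownian.cov_weighted (hW : IsStdBrownian μ W) {ν₁ ν₂ : Measure ℝ} [SFinite ν₁]
    [SFinite ν₂] (hν₁ : ∀ᵐ s ∂ν₁, 0 < s) (hν₂ : ∀ᵐ s ∂ν₂, 0 < s) {f g : ℝ → ℝ}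
    (hf : Measurable f) (hg : Measurable g) (hfi : Integrable (fun s => |f s| * √s) ν₁)
    (hgi : Integrable (fun s => |g s| * √s) ν₂) :
    Integrable (fun ω => (∫ s, f s * W s ω ∂ν₁) * ∫ t, g t * W t ω ∂ν₂) μ ∧
    ∫ ω, (∫ s, f s * W s ω ∂ν₁) * (∫ t, g t * W t ω ∂ν₂) ∂μ =
      ∫ s, f s * ∫ t, g t * min s t ∂ν₂ ∂ν₁ := by
  have : IsProbabilityMeasure μ := hW.1
  have hpos : ∀ᵐ p ∂ν₁.prod ν₂, 0 < p.1 ∧ 0 < p.2 :=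
    (Measure.quasiMeasurePreserving_fst.ae hν₁).and (Measure.quasiMeasurePreserving_snd.ae hν₂)
  have hJ := hW.measurable_joint
  have hK : Measurable fun p : Ω × ℝ × ℝ =>
      (f p.2.1 * W p.2.1 p.1) * (g p.2.2 * W p.2.2 p.1) := by
    have h1 : Measurable fun p : Ω × ℝ × ℝ => W p.2.1 p.1 :=
      hJ.comp (measurable_fst.prodMk (measurable_fst.comp measurable_snd))
    have h2 : Measurable fun p : Ω × ℝ × ℝ => W p.2.2 p.1 :=
      hJ.comp (measurable_fst.prodMk (measurable_snd.comp measurable_snd))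
    exact ((hf.comp (measurable_fst.comp measurable_snd)).mul h1).mul
      ((hg.comp (measurable_snd.comp measurable_snd)).mul h2)
  have hint : Integrable (fun p : Ω × ℝ × ℝ =>
      (f p.2.1 * W p.2.1 p.1) * (g p.2.2 * W p.2.2 p.1)) (μ.prod (ν₁.prod ν₂)) := by
    refine integrable_prod_of_bound hK (hfi.mul_prod hgi) ?_
    filter_upwards [hpos] with p hp
    have e : ∀ ω, f p.1 * W p.1 ω * (g p.2 * W p.2 ω)
        = (f p.1 * g p.2) * (W p.1 ω * W p.2 ω) := fun ω => by ring
    simp only [e]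
    refine ⟨((hW.memLp hp.1.le).integrable_mul (hW.memLp hp.2.le)).const_mul _, ?_⟩
    simp only [abs_mul (f p.1 * g p.2)]
    rw [integral_const_mul, abs_mul (f p.1)]
    calc _ ≤ |f p.1| * |g p.2| * (√p.1 * √p.2) :=
          mul_le_mul_of_nonneg_left (hW.integral_abs_mul_le hp.1 hp.2) (by positivity)
      _ = _ := by ring
  -- The product of two integrals is an integral over the product measure for every `ω`, with no
  -- integrability of the path needed.
  have hprod : ∀ ω, ∫ p : ℝ × ℝ, (f p.1 * W p.1 ω) * (g p.2 * W p.2 ω) ∂ν₁.prod ν₂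
      = (∫ s, f s * W s ω ∂ν₁) * ∫ t, g t * W t ω ∂ν₂ := fun ω =>
    integral_prod_mul (fun s => f s * W s ω) (fun t => g t * W t ω)
  have hI := hint.integral_prod_left
  simp only [hprod] at hI
  refine ⟨hI, ?_⟩
  simp_rw [← hprod]
  have hcov : ∀ᵐ p ∂ν₁.prod ν₂,
      ∫ ω, (f p.1 * W p.1 ω) * (g p.2 * W p.2 ω) ∂μ = f p.1 * (g p.2 * min p.1 p.2) := by
    filter_upwards [hpos] with p hp
    rw [← hW.integral_mul hp.1.le hp.2.le, ← integral_const_mul, ← integral_const_mul]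
    congr 1; ext ω; ring
  rw [integral_integral_swap (f := fun ω (p : ℝ × ℝ) =>
    (f p.1 * W p.1 ω) * (g p.2 * W p.2 ω)) hint, integral_congr_ae hcov, integral_prod]
  · simp_rw [integral_const_mul]
  · exact hint.integral_prod_right.congr hcov

end WeightedIntegrals

/-! ### Integrals of powers against the kernel `min s t` -/

section PowerWeights

lemma integrableOn_rpow_Ioc {r : ℝ} (hr : -1 < r) :
    IntegrableOn (fun s : ℝ => s ^ r) (Set.Ioc 0 1) :=
  (intervalIntegrable_iff_integrableOn_Ioc_of_le zero_le_one).1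
    (intervalIntegral.intervalIntegrable_rpow' hr)

lemma integral_rpow_Ioc {r : ℝ} (hr : -1 < r) :
    ∫ s in Set.Ioc (0:ℝ) 1, s ^ r = 1 / (r + 1) := by
  rw [← intervalIntegral.integral_of_le zero_le_one, integral_rpow (Or.inl hr), Real.one_rpow,
    Real.zero_rpow (by linarith), sub_zero]

lemma integrableOn_weight {r : ℝ} (hr : -3/2 < r) :
    Integrable (fun s : ℝ => |s ^ r| * √s) (volume.restrict (Set.Ioc 0 1)) := by
  refine (integrableOn_rpow_Ioc (r := r + 1/2) (by linarith)).congr_fun (fun s hs => ?_)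
    measurableSet_Ioc
  simp only
  rw [abs_of_nonneg (Real.rpow_nonneg hs.1.le _), Real.sqrt_eq_rpow, Real.rpow_add hs.1]

/-- Splitting at `t = s` gives `∫₀ˢ t^g dt + s ∫ₛ¹ t^(g-1) dt`. The second integral stays away from `0`,
so the same formula is valid for `g < 0`. -/
lemma inner_integral {g s : ℝ} (hg : -1 < g) (hg0 : g ≠ 0) (hs : s ∈ Set.Ioc (0:ℝ) 1) :
    ∫ t in Set.Ioc (0:ℝ) 1, t ^ (g - 1) * min s t =
      s ^ (g + 1) / (g + 1) + s * ((1 - s ^ g) / g) := by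
  have h1 : Set.EqOn (fun t : ℝ => t ^ (g - 1) * min s t) (fun t => t ^ g) (Set.Ioc 0 s) := by
    intro t ht
    simp only
    rw [min_eq_right ht.2, ← Real.rpow_add_one ht.1.ne', sub_add_cancel]
  have h2 : Set.EqOn (fun t : ℝ => t ^ (g - 1) * min s t) (fun t => s * t ^ (g - 1))
      (Set.Ioc s 1) := by
    intro t ht
    simp only
    rw [min_eq_left ht.1.le, mul_comm]
  have hn : (0:ℝ) ∉ Set.uIcc s 1 := by
    rw [Set.uIcc_of_le hs.2]; exact fun h => absurd h.1 (not_le.2 hs.1)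
  have i1 : IntegrableOn (fun t : ℝ => t ^ g) (Set.Ioc 0 s) :=
    (integrableOn_rpow_Ioc hg).mono_set (Set.Ioc_subset_Ioc_right hs.2)
  have i2 : IntegrableOn (fun t : ℝ => s * t ^ (g - 1)) (Set.Ioc s 1) :=
    ((intervalIntegrable_iff_integrableOn_Ioc_of_le hs.2).1
      (intervalIntegral.intervalIntegrable_rpow (Or.inr hn))).const_mul s
  rw [← Set.Ioc_union_Ioc_eq_Ioc hs.1.le hs.2, setIntegral_union
    (Set.Ioc_disjoint_Ioc_of_le le_rfl) measurableSet_Ioc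
    (i1.congr_fun h1.symm measurableSet_Ioc) (i2.congr_fun h2.symm measurableSet_Ioc),
    setIntegral_congr_fun measurableSet_Ioc h1, setIntegral_congr_fun measurableSet_Ioc h2,
    integral_const_mul, ← intervalIntegral.integral_of_le hs.1.le,
    ← intervalIntegral.integral_of_le hs.2, integral_rpow (Or.inl hg),
    integral_rpow (Or.inr ⟨by simpa [sub_eq_iff_eq_add] using hg0, hn⟩), Real.one_rpow,
    Real.zero_rpow (by linarith), sub_zero, sub_add_cancel]

/-- After multiplication by `s^r`, both powers of `s` in `inner_integral` have exponent above `-1`.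
Integrating the weight `t^(g-1)` first,
with `g ≠ 0`, keeps logarithms out even for `r = -1`. -/
lemma double_integral {g r : ℝ} (hg : -1 < g) (hg0 : g ≠ 0) (hr : -2 < r)
    (hgr : -2 < g + r) :
    ∫ s in Set.Ioc (0:ℝ) 1, s ^ r * ∫ t in Set.Ioc (0:ℝ) 1, t ^ (g - 1) * min s t =
      (1 / (g + 1) - 1 / g) * (1 / (g + r + 2)) + 1 / g * (1 / (r + 2)) := by
  have h : Set.EqOn (fun s : ℝ => s ^ r * ∫ t in Set.Ioc (0:ℝ) 1, t ^ (g - 1) * min s t)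
      (fun s => (1 / (g + 1) - 1 / g) * s ^ (g + r + 1) + 1 / g * s ^ (r + 1))
      (Set.Ioc 0 1) := by
    intro s hs
    simp only
    rw [inner_integral hg hg0 hs, Real.rpow_add_one hs.1.ne', Real.rpow_add_one hs.1.ne',
      Real.rpow_add_one hs.1.ne', Real.rpow_add hs.1]
    ring
  rw [setIntegral_congr_fun measurableSet_Ioc h, integral_add
    ((integrableOn_rpow_Ioc (by linarith)).const_mul _)
    ((integrableOn_rpow_Ioc (by linarith)).const_mul _), integral_const_mul, integral_const_mul,
    integral_rpow_Ioc (by linarith), integral_rpow_Ioc (by linarith)]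
  ring_nf

end PowerWeights

/-! ### The functionals `∫₀¹ s^r W(s) ds` and the covariance -/

section Main

variable {Ω : Type*} [MeasurableSpace Ω] {μ : Measure Ω} {W : ℝ → Ω → ℝ}

lemma ae_pos_Ioc : ∀ᵐ s ∂(volume.restrict (Set.Ioc (0:ℝ) 1)), 0 < s :=
  (ae_restrict_mem measurableSet_Ioc).mono fun _ hs => hs.1

lemma measurable_rpow_weight (r : ℝ) : Measurable fun s : ℝ => s ^ r :=
  measurable_id.pow_const r

/-- The path functional `∫₀¹ s^r W(s) ds`. -/
noncomputable def powInt (W : ℝ → Ω → ℝ) (r : ℝ) (ω : Ω) : ℝ :=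
  ∫ s in Set.Ioc (0:ℝ) 1, s ^ r * W s ω

/-- For `r ≤ -1` the integrand may blow up at `0` faster than continuity of the path controls, so
integrability holds only almost surely. -/
lemma IsStdBrownian.integrable_path (hW : IsStdBrownian μ W) {r : ℝ} (hr : -3/2 < r) :
    ∀ᵐ ω ∂μ, IntegrableOn (fun s => s ^ r * W s ω) (Set.Ioc 0 1) := by
  have : IsProbabilityMeasure μ := hW.1
  exact (hW.integrable_weighted ae_pos_Ioc (measurable_rpow_weight r)
    (integrableOn_weight hr)).prod_right_ae

lemma IsStdBrownian.integrable_powInt (hW : IsStdBrownian μ W) {r : ℝ} (hr : -3/2 < r) :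
    Integrable (powInt W r) μ :=
  (hW.integrable_weighted ae_pos_Ioc (measurable_rpow_weight r)
    (integrableOn_weight hr)).integral_prod_left

lemma IsStdBrownian.mean_powInt (hW : IsStdBrownian μ W) {r : ℝ} (hr : -3/2 < r) :
    ∫ ω, powInt W r ω ∂μ = 0 :=
  hW.mean_weighted ae_pos_Ioc (measurable_rpow_weight r) (integrableOn_weight hr)

lemma IsStdBrownian.cov_powInt (hW : IsStdBrownian μ W) {g r : ℝ} (hg : -1/2 < g)
    (hg0 : g ≠ 0) (hr : -3/2 < r) :
    Integrable (fun ω => powInt W r ω * powInt W (g - 1) ω) μ ∧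
    ∫ ω, powInt W r ω * powInt W (g - 1) ω ∂μ =
      (1 / (g + 1) - 1 / g) * (1 / (g + r + 2)) + 1 / g * (1 / (r + 2)) := by
  have h := hW.cov_weighted ae_pos_Ioc ae_pos_Ioc (measurable_rpow_weight r)
    (measurable_rpow_weight (g - 1)) (integrableOn_weight hr)
    (integrableOn_weight (by linarith))
  exact ⟨h.1, h.2.trans (double_integral (by linarith) hg0 (by linarith) (by linarith))⟩

lemma IsStdBrownian.cov_powInt_one (hW : IsStdBrownian μ W) {r : ℝ} (hr : -3/2 < r) :
    Integrable (fun ω => powInt W r ω * W 1 ω) μ ∧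
    ∫ ω, powInt W r ω * W 1 ω ∂μ = 1 / (r + 2) := by
  -- `W 1` is the integral of the path against the Dirac mass at `1`.
  have h := hW.cov_weighted (ν₂ := Measure.dirac 1) (g := fun _ => 1) ae_pos_Ioc
    (by simp [ae_dirac_eq]) (measurable_rpow_weight r) measurable_const
    (integrableOn_weight hr) (integrable_dirac (by simp))
  simp only [one_mul, integral_dirac] at h
  refine ⟨h.1, h.2.trans ?_⟩
  rw [setIntegral_congr_fun (g := fun s : ℝ => s ^ (r + 1)) measurableSet_Ioc,
    integral_rpow_Ioc (by linarith)]
  · ring_nf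
  · intro s hs
    simp only
    rw [min_eq_left hs.2, Real.rpow_add_one hs.1.ne']

lemma IsStdBrownian.Ustat2_eq (hW : IsStdBrownian μ W) {g : ℝ} (hg : -1/2 < g) :
    ∀ᵐ ω ∂μ, Ustat2 W g ω = (1 + g) * (powInt W (g - 1) ω - 1 / (2 * g + 1) * W 1 ω) := by
  filter_upwards [hW.integrable_path (r := g - 1) (by linarith)] with ω hω
  have i2 := (integrableOn_rpow_Ioc (r := 2 * g) (by linarith)).mul_const (W 1 ω)
  have e : Set.EqOn (fun s : ℝ => s ^ (2*g) * (s ^ (-g-1) * W s ω - W 1 ω))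
      (fun s => s ^ (g - 1) * W s ω - s ^ (2 * g) * W 1 ω) (Set.Ioc 0 1) := by
    intro s hs
    have : s ^ (2*g) * s ^ (-g-1) = s ^ (g - 1) := by
      rw [← Real.rpow_add hs.1]; ring_nf
    simp only
    rw [← this]; ring
  rw [Ustat2, setIntegral_congr_fun measurableSet_Ioc e, integral_sub hω i2,
    integral_mul_const, integral_rpow_Ioc (by linarith)]
  rfl

/-- The statement holds only almost surely: splitting the integral requires the two path integrals to
converge separately. -/
lemma IsStdBrownian.Ustat1_eq (hW : IsStdBrownian μ W) {g : ℝ} (hg : -1/2 < g) :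
    ∀ᵐ ω ∂μ, Ustat1 W g ω = (1 / g) * (powInt W (-1) ω - (1 + g) * powInt W (g - 1) ω -
      (1 / (g + 1) - (1 + g) * (1 / (2 * g + 1))) * W 1 ω) := by
  filter_upwards [hW.integrable_path (r := g - 1) (by linarith),
    hW.integrable_path (r := -1) (by norm_num)] with ω hB hA
  have i1 := integrableOn_rpow_Ioc (r := g) (by linarith)
  have i2 := (integrableOn_rpow_Ioc (r := 2 * g) (by linarith)).const_mul (1 + g)
  have e : Set.EqOn
      (fun s : ℝ => (s ^ g - (1+g) * s ^ (2*g)) * (s ^ (-g-1) * W s ω - W 1 ω))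
      (fun s => s ^ (-1:ℝ) * W s ω - (1 + g) * (s ^ (g - 1) * W s ω) -
        (s ^ g - (1 + g) * s ^ (2 * g)) * W 1 ω) (Set.Ioc 0 1) := by
    intro s hs
    have h1 : s ^ (2*g) * s ^ (-g-1) = s ^ (g - 1) := by
      rw [← Real.rpow_add hs.1]; ring_nf
    have h2 : s ^ g * s ^ (-g-1) = s ^ (-1:ℝ) := by
      rw [← Real.rpow_add hs.1]; ring_nf
    simp only
    rw [← h1, ← h2]; ring
  rw [Ustat1, setIntegral_congr_fun measurableSet_Ioc e,
    integral_sub (hA.fun_sub (hB.const_mul _)) ((i1.fun_sub i2).mul_const _),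
    integral_sub hA (hB.const_mul _), integral_mul_const, integral_sub i1 i2,
    integral_const_mul, integral_const_mul, integral_rpow_Ioc (by linarith),
    integral_rpow_Ioc (by linarith)]
  rfl

end Main

theorem stmt_5 {Ω : Type*} [MeasurableSpace Ω] (μ : Measure Ω) (W : ℝ → Ω → ℝ)
    (hW : IsStdBrownian μ W) (γ₀ : ℝ) (hγ : -1/2 < γ₀) (hγ0 : γ₀ ≠ 0) :
    (∫ ω, Ustat1 W γ₀ ω * Ustat2 W γ₀ ω ∂μ) -
      (∫ ω, Ustat1 W γ₀ ω ∂μ) * (∫ ω, Ustat2 W γ₀ ω ∂μ) =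
      (1+γ₀) / (1+2*γ₀)^2 := by
  have : IsProbabilityMeasure μ := hW.1
  have hr : -3/2 < γ₀ - 1 := by linarith
  -- One centred factor is enough to remove the product of means.
  have hmean : ∫ ω, Ustat2 W γ₀ ω ∂μ = 0 := by
    rw [integral_congr_ae (hW.Ustat2_eq hγ), integral_const_mul,
      integral_sub (hW.integrable_powInt hr)
        (((hW.memLp zero_le_one).integrable (by norm_num)).const_mul _),
      integral_const_mul, hW.mean_powInt hr, hW.mean zero_le_one]
    ring
  obtain ⟨iAB, eAB⟩ := hW.cov_powInt hγ hγ0 (r := -1) (by norm_num)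
  obtain ⟨iBB, eBB⟩ := hW.cov_powInt hγ hγ0 hr
  obtain ⟨iAX, eAX⟩ := hW.cov_powInt_one (r := -1) (by norm_num)
  obtain ⟨iBX, eBX⟩ := hW.cov_powInt_one hr
  have iXX := (hW.memLp zero_le_one).integrable_sq
  have eXX := hW.second_moment zero_le_one
  set c : ℝ := 1 / (γ₀ + 1) - (1 + γ₀) * (1 / (2 * γ₀ + 1)) with hc
  set d : ℝ := 1 / (2 * γ₀ + 1) with hd
  have hexp : ∀ᵐ ω ∂μ, Ustat1 W γ₀ ω * Ustat2 W γ₀ ω = (1 + γ₀) / γ₀ *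
      (powInt W (-1) ω * powInt W (γ₀ - 1) ω - d * (powInt W (-1) ω * W 1 ω)
        - (1 + γ₀) * (powInt W (γ₀ - 1) ω * powInt W (γ₀ - 1) ω)
        + ((1 + γ₀) * d - c) * (powInt W (γ₀ - 1) ω * W 1 ω) + c * d * W 1 ω ^ 2) := by
    filter_upwards [hW.Ustat1_eq hγ, hW.Ustat2_eq hγ] with ω h1 h2
    rw [h1, h2]
    ring
  have k1 : Integrable (fun ω => powInt W (-1) ω * powInt W (γ₀ - 1) ω
      - d * (powInt W (-1) ω * W 1 ω)) μ := iAB.sub (iAX.const_mul d)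
  have k2 : Integrable (fun ω => powInt W (-1) ω * powInt W (γ₀ - 1) ω
      - d * (powInt W (-1) ω * W 1 ω)
      - (1 + γ₀) * (powInt W (γ₀ - 1) ω * powInt W (γ₀ - 1) ω)) μ :=
    k1.sub (iBB.const_mul (1 + γ₀))
  have k3 : Integrable (fun ω => powInt W (-1) ω * powInt W (γ₀ - 1) ω
      - d * (powInt W (-1) ω * W 1 ω)
      - (1 + γ₀) * (powInt W (γ₀ - 1) ω * powInt W (γ₀ - 1) ω)
      + ((1 + γ₀) * d - c) * (powInt W (γ₀ - 1) ω * W 1 ω)) μ :=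
    k2.add (iBX.const_mul ((1 + γ₀) * d - c))
  rw [hmean, mul_zero, sub_zero, integral_congr_ae hexp, integral_const_mul,
    integral_add k3 (iXX.const_mul _), integral_add k2 (iBX.const_mul _),
    integral_sub k1 (iBB.const_mul _), integral_sub iAB (iAX.const_mul _),
    integral_const_mul, integral_const_mul, integral_const_mul, integral_const_mul,
    eAB, eBB, eAX, eBX, eXX, hc, hd]
  have h1 : γ₀ + 1 ≠ 0 := by linarith
  have h2 : 2 * γ₀ + 1 ≠ 0 := by linarith
  rw [show γ₀ + -1 + 2 = γ₀ + 1 by ring, show γ₀ + (γ₀ - 1) + 2 = 2 * γ₀ + 1 by ring,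
    show γ₀ - 1 + 2 = γ₀ + 1 by ring, show (-1 : ℝ) + 2 = 1 by norm_num,
    show 1 + 2 * γ₀ = 2 * γ₀ + 1 by ring, add_comm 1 γ₀]
  clear_value c d
  generalize hD : 2 * γ₀ + 1 = D at h2 ⊢
  field_simp
  rw [← hD]
  ring
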